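/- arXiv:1501.02424 — 2 statements merged into one kernel-verified Lean document; each statement's English description precedes it below -/
import Mathlib

section
/- There exists a constant C > 0, independent of h, the center of K, u and v, such that for every h > 0, every square K of half side h, every function u of class C⁴ on a neighborhood of K, and every v in the shape space P(K) = P₂(K) + span{x₁³, x₂³}, one has |(h²/3)∫_K (∂³u/∂x₁∂x₂²)(∂³v/∂x₁³) dx + (h²/3)∫_K (∂³u/∂x₁²∂x₂)(∂³v/∂x₂³) dx + a ∫_K ∂³v/∂x₁³ dx + b ∫_K ∂³v/∂x₂³ dx| ≤ C h² |u|_{H⁴(K)} |v|_{H²(K)}, where a = −(h/6)∫_{x₂c−h}^{x₂c+h} (∂³u/∂x₁∂x₂²)(x₁c+h, x₂) dx₂ and b = −(h/6)∫_{x₁c−h}^{x₁c+h} (∂³u/∂x₁²∂x₂)(x₁, x₂c−h) dx₁. -/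
open MeasureTheory

/-- Partial derivative in the first variable of a curried function on `ℝ²`. -/
noncomputable def pdx (f : ℝ → ℝ → ℝ) : ℝ → ℝ → ℝ := fun x y => deriv (fun t => f t y) x

/-- Partial derivative in the second variable of a curried function on `ℝ²`. -/
noncomputable def pdy (f : ℝ → ℝ → ℝ) : ℝ → ℝ → ℝ := fun x y => deriv (fun t => f x t) y

/-- Membership in the shape space `P(K) = P₂(K) + span{x₁³, x₂³}` of the two-dimensional
rectangular Morley element. -/
def MorleyShape2 (w : ℝ → ℝ → ℝ) : Prop :=
  ∃ c0 c1 c2 c3 c4 c5 c6 c7 : ℝ, ∀ x y : ℝ,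
    w x y = c0 + c1 * x + c2 * y + c3 * x ^ 2 + c4 * (x * y) + c5 * y ^ 2
      + c6 * x ^ 3 + c7 * y ^ 3

/-- The `H²` seminorm of `v` on the rectangle `[a,b] × [c,d]`, each ordering of mixed
partial derivatives counted. -/
noncomputable def semiH2R (v : ℝ → ℝ → ℝ) (a b c d : ℝ) : ℝ :=
  Real.sqrt (∫ x in a..b, ∫ y in c..d,
    (pdx (pdx v) x y) ^ 2 + (pdx (pdy v) x y) ^ 2 + (pdy (pdx v) x y) ^ 2
      + (pdy (pdy v) x y) ^ 2)

/-- The `H⁴` seminorm of `u` on the rectangle `[a,b] × [c,d]`, each ordering of mixed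
partial derivatives counted (hence the binomial coefficients). -/
noncomputable def semiH4R (u : ℝ → ℝ → ℝ) (a b c d : ℝ) : ℝ :=
  Real.sqrt (∫ x in a..b, ∫ y in c..d,
    (pdx (pdx (pdx (pdx u))) x y) ^ 2 + 4 * (pdx (pdx (pdx (pdy u))) x y) ^ 2
      + 6 * (pdx (pdx (pdy (pdy u))) x y) ^ 2 + 4 * (pdx (pdy (pdy (pdy u))) x y) ^ 2
      + (pdy (pdy (pdy (pdy u))) x y) ^ 2)

/-- `u` is of class `C⁴` on a neighborhood of the rectangle `[a,b] × [c,d]`. -/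
def C4Near (u : ℝ → ℝ → ℝ) (a b c d : ℝ) : Prop :=
  ∃ U : Set (ℝ × ℝ), IsOpen U ∧ Set.Icc a b ×ˢ Set.Icc c d ⊆ U ∧
    ContDiffOn ℝ 4 (fun p : ℝ × ℝ => u p.1 p.2) U

/-!
The third derivatives `∂₁³v = α` and `∂₂³v = β` are constants, so with `K` of side `2h` the
expression to be bounded is
`(h²/3) (α (∫_K ∂₁∂₂²u - 2h ∫_E ∂₁∂₂²u) + β (∫_K ∂₁²∂₂u - 2h ∫_F ∂₁²∂₂u))`,
where `E` is the right edge and `F` the bottom edge of `K`. Each bracket is the error of a one-point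
quadrature rule across `K`, hence at most `2h ∫_K |∂₁²∂₂²u| ≤ (2h)² |u|_{H⁴(K)}` by Cauchy–Schwarz.
As `∂₁²v` is affine in `x₁` with slope `α`, its `L²(K)` norm is at least `(2h)² |α| / √12 ≥ h² |α|`,
so that `h² |α| ≤ |v|_{H²(K)}`, and likewise for `β`.
-/

open Set Function

section PartialDerivatives

variable {f g : ℝ → ℝ → ℝ} {x y : ℝ} {p : ℝ × ℝ} {m n : WithTop ℕ∞}
  {K : Set (ℝ × ℝ)}

lemma hasDerivAt_fst_of_differentiableAt (hf : DifferentiableAt ℝ (uncurry f) (x, y)) :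
    HasDerivAt (fun t => f t y) (fderiv ℝ (uncurry f) (x, y) (1, 0)) x :=
  hf.hasFDerivAt.comp_hasDerivAt (f := fun t => (t, y)) x
    ((hasDerivAt_id x).prodMk (hasDerivAt_const x y))

lemma hasDerivAt_snd_of_differentiableAt (hf : DifferentiableAt ℝ (uncurry f) (x, y)) :
    HasDerivAt (fun t => f x t) (fderiv ℝ (uncurry f) (x, y) (0, 1)) y :=
  hf.hasFDerivAt.comp_hasDerivAt (f := fun t => (x, t)) y
    ((hasDerivAt_const y x).prodMk (hasDerivAt_id y))

lemma pdx_eq_fderiv (hf : DifferentiableAt ℝ (uncurry f) (x, y)) :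
    pdx f x y = fderiv ℝ (uncurry f) (x, y) (1, 0) :=
  (hasDerivAt_fst_of_differentiableAt hf).deriv

lemma pdy_eq_fderiv (hf : DifferentiableAt ℝ (uncurry f) (x, y)) :
    pdy f x y = fderiv ℝ (uncurry f) (x, y) (0, 1) :=
  (hasDerivAt_snd_of_differentiableAt hf).deriv

lemma hasDerivAt_pdy (hf : DifferentiableAt ℝ (uncurry f) (x, y)) :
    HasDerivAt (fun t => f x t) (pdy f x y) y :=
  (hasDerivAt_snd_of_differentiableAt hf).differentiableAt.hasDerivAt

lemma eventually_differentiableAt_of_contDiffAt (hf : ContDiffAt ℝ n (uncurry f) p) (hn : 1 ≤ n) :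
    ∀ᶠ q in nhds p, DifferentiableAt ℝ (uncurry f) q :=
  ((hf.of_le hn).eventually (by simp)).mono fun _ hq => hq.differentiableAt one_ne_zero

lemma pdx_eventuallyEq_fderiv (hf : ContDiffAt ℝ n (uncurry f) p) (hn : 1 ≤ n) :
    uncurry (pdx f) =ᶠ[nhds p] fun q => fderiv ℝ (uncurry f) q (1, 0) :=
  (eventually_differentiableAt_of_contDiffAt hf hn).mono fun _ => pdx_eq_fderiv

lemma pdy_eventuallyEq_fderiv (hf : ContDiffAt ℝ n (uncurry f) p) (hn : 1 ≤ n) :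
    uncurry (pdy f) =ᶠ[nhds p] fun q => fderiv ℝ (uncurry f) q (0, 1) :=
  (eventually_differentiableAt_of_contDiffAt hf hn).mono fun _ => pdy_eq_fderiv

lemma contDiffAt_pdx (hf : ContDiffAt ℝ n (uncurry f) p) (hmn : m + 1 ≤ n) :
    ContDiffAt ℝ m (uncurry (pdx f)) p :=
  ((hf.fderiv_right hmn).clm_apply contDiffAt_const).congr_of_eventuallyEq
    (pdx_eventuallyEq_fderiv hf (le_add_self.trans hmn))

lemma contDiffAt_pdy (hf : ContDiffAt ℝ n (uncurry f) p) (hmn : m + 1 ≤ n) :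
    ContDiffAt ℝ m (uncurry (pdy f)) p :=
  ((hf.fderiv_right hmn).clm_apply contDiffAt_const).congr_of_eventuallyEq
    (pdy_eventuallyEq_fderiv hf (le_add_self.trans hmn))

lemma pdx_congr_of_eventuallyEq (h : uncurry f =ᶠ[nhds (x, y)] uncurry g) :
    pdx f x y = pdx g x y :=
  Filter.EventuallyEq.deriv_eq ((Continuous.prodMk_left y).continuousAt.eventually h)

lemma fderiv_fderiv_apply_const (hf : ContDiffAt ℝ 2 (uncurry f) p) (v w : ℝ × ℝ) :
    fderiv ℝ (fun q => fderiv ℝ (uncurry f) q v) p w = fderiv ℝ (fderiv ℝ (uncurry f)) p w v := by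
  have hdiff : DifferentiableAt ℝ (fderiv ℝ (uncurry f)) p :=
    (hf.fderiv_right one_add_one_eq_two.le).differentiableAt one_ne_zero
  simp [fderiv_clm_apply hdiff (differentiableAt_const v)]

lemma pdy_pdx_eq_pdx_pdy (hf : ContDiffAt ℝ 2 (uncurry f) (x, y)) :
    pdy (pdx f) x y = pdx (pdy f) x y := by
  have hdx : DifferentiableAt ℝ (uncurry (pdx f)) (x, y) :=
    (contDiffAt_pdx hf one_add_one_eq_two.le).differentiableAt one_ne_zero
  have hdy : DifferentiableAt ℝ (uncurry (pdy f)) (x, y) :=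
    (contDiffAt_pdy hf one_add_one_eq_two.le).differentiableAt one_ne_zero
  rw [pdy_eq_fderiv hdx, pdx_eq_fderiv hdy,
    (pdx_eventuallyEq_fderiv hf one_le_two).fderiv_eq,
    (pdy_eventuallyEq_fderiv hf one_le_two).fderiv_eq,
    fderiv_fderiv_apply_const hf, fderiv_fderiv_apply_const hf]
  exact (hf.isSymmSndFDerivAt (by simp)).eq _ _

lemma pdy_pdx_pdx_eq_pdx_pdx_pdy (hf : ContDiffAt ℝ 3 (uncurry f) (x, y)) :
    pdy (pdx (pdx f)) x y = pdx (pdx (pdy f)) x y := by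
  rw [pdy_pdx_eq_pdx_pdy (contDiffAt_pdx hf (by norm_num))]
  refine pdx_congr_of_eventuallyEq ?_
  exact ((hf.of_le (m := 2) (by norm_num)).eventually (by simp)).mono fun _ => pdy_pdx_eq_pdx_pdy

lemma continuousOn_pdx (hf : ∀ p ∈ K, ContDiffAt ℝ 1 (uncurry f) p) :
    ContinuousOn (uncurry (pdx f)) K :=
  continuousOn_of_forall_continuousAt fun p hp =>
    (contDiffAt_pdx (m := 0) (hf p hp) (by simp)).continuousAt

lemma continuousOn_pdy (hf : ∀ p ∈ K, ContDiffAt ℝ 1 (uncurry f) p) :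
    ContinuousOn (uncurry (pdy f)) K :=
  continuousOn_of_forall_continuousAt fun p hp =>
    (contDiffAt_pdy (m := 0) (hf p hp) (by simp)).continuousAt

lemma continuousOn_second_partials (hf : ∀ p ∈ K, ContDiffAt ℝ 2 (uncurry f) p) :
    ContinuousOn (uncurry (pdx (pdx f))) K ∧ ContinuousOn (uncurry (pdx (pdy f))) K ∧
      ContinuousOn (uncurry (pdy (pdx f))) K ∧ ContinuousOn (uncurry (pdy (pdy f))) K := by
  have hx : ∀ p ∈ K, ContDiffAt ℝ 1 (uncurry (pdx f)) p := fun p hp =>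
    contDiffAt_pdx (hf p hp) one_add_one_eq_two.le
  have hy : ∀ p ∈ K, ContDiffAt ℝ 1 (uncurry (pdy f)) p := fun p hp =>
    contDiffAt_pdy (hf p hp) one_add_one_eq_two.le
  exact ⟨continuousOn_pdx hx, continuousOn_pdx hy, continuousOn_pdy hx, continuousOn_pdy hy⟩

end PartialDerivatives

section OnePointQuadrature

variable {E : Type*} [NormedAddCommGroup E] [NormedSpace ℝ E] [CompleteSpace E]
  {f f' : ℝ → E} {c d x y : ℝ}

lemma norm_sub_le_integral_norm_of_hasDerivAt (hf : ∀ t ∈ Icc c d, HasDerivAt f (f' t) t)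
    (hf' : IntervalIntegrable f' volume c d) (hx : x ∈ Icc c d) (hy : y ∈ Icc c d) :
    ‖f y - f x‖ ≤ ∫ t in c..d, ‖f' t‖ := by
  have hcd : c ≤ d := hx.1.trans hx.2
  have hxy : uIcc x y ⊆ uIcc c d :=
    uIcc_subset_uIcc (Icc_subset_uIcc hx) (Icc_subset_uIcc hy)
  rw [← intervalIntegral.integral_eq_sub_of_hasDerivAt
    (fun t ht => hf t (uIcc_of_le hcd ▸ hxy ht)) (hf'.mono_set hxy),
    intervalIntegral.integral_of_le hcd]
  refine intervalIntegral.norm_integral_le_integral_norm_uIoc.trans ?_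
  exact setIntegral_mono_set hf'.norm.1 (ae_of_all _ fun t => norm_nonneg _)
    (Ioc_subset_Ioc (le_min hx.1 hy.1) (max_le hx.2 hy.2)).eventuallyLE

lemma norm_integral_sub_smul_le_of_hasDerivAt (hf : ∀ t ∈ Icc c d, HasDerivAt f (f' t) t)
    (hf' : IntervalIntegrable f' volume c d) (hx : x ∈ Icc c d) :
    ‖(∫ t in c..d, f t) - (d - c) • f x‖ ≤ (d - c) * ∫ t in c..d, ‖f' t‖ := by
  have hcd : c ≤ d := hx.1.trans hx.2
  have hfi : IntervalIntegrable f volume c d := ContinuousOn.intervalIntegrable_of_Icc hcd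
    fun t ht => (hf t ht).continuousAt.continuousWithinAt
  rw [← intervalIntegral.integral_const, ← intervalIntegral.integral_sub hfi (by simp), mul_comm,
    ← abs_of_nonneg (sub_nonneg.2 hcd)]
  refine intervalIntegral.norm_integral_le_of_norm_le_const fun t ht => ?_
  rw [uIoc_of_le hcd] at ht
  exact norm_sub_le_integral_norm_of_hasDerivAt hf hf' hx (Ioc_subset_Icc_self ht)

end OnePointQuadrature

lemma integral_norm_le_sqrt_measureReal_mul_sqrt_integral_norm_sq {α E : Type*}
    [MeasurableSpace α] {μ : Measure α} [IsFiniteMeasure μ] [NormedAddCommGroup E] {f : α → E}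
    (hf : MemLp f 2 μ) : ∫ x, ‖f x‖ ∂μ ≤ √(μ.real univ) * √(∫ x, ‖f x‖ ^ 2 ∂μ) := by
  have holder := integral_mul_norm_le_Lp_mul_Lq (f := fun _ => (1 : ℝ)) (g := fun x => ‖f x‖)
    Real.HolderConjugate.two_two (memLp_const 1) (by simpa using hf.norm)
  simpa [Real.sqrt_eq_rpow] using holder

section Rectangle

variable {f g : ℝ → ℝ → ℝ} {a b c d e : ℝ}

/-- The `L²` norm of `f` on the rectangle `[a,b] × [c,d]`, written as an iterated integral to match
`semiH2R` and `semiH4R`. -/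
noncomputable def normL2R (f : ℝ → ℝ → ℝ) (a b c d : ℝ) : ℝ :=
  √(∫ x in a..b, ∫ y in c..d, f x y ^ 2)

lemma integrableOn_rectangle (hf : ContinuousOn (uncurry f) (Icc a b ×ˢ Icc c d)) :
    IntegrableOn (uncurry f) (Icc a b ×ˢ Icc c d) :=
  hf.integrableOn_compact (isCompact_Icc.prod isCompact_Icc)

lemma integral_integral_eq_setIntegral_rectangle (hab : a ≤ b) (hcd : c ≤ d)
    (hf : ContinuousOn (uncurry f) (Icc a b ×ˢ Icc c d)) :
    ∫ x in a..b, ∫ y in c..d, f x y = ∫ p in Icc a b ×ˢ Icc c d, uncurry f p := by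
  simp only [Measure.volume_eq_prod, setIntegral_prod _ (integrableOn_rectangle hf),
    intervalIntegral.integral_of_le, hab, hcd, integral_Icc_eq_integral_Ioc, uncurry_apply_pair]

lemma integral_integral_mono_on_rectangle (hab : a ≤ b) (hcd : c ≤ d)
    (hf : ContinuousOn (uncurry f) (Icc a b ×ˢ Icc c d))
    (hg : ContinuousOn (uncurry g) (Icc a b ×ˢ Icc c d))
    (hfg : ∀ x ∈ Icc a b, ∀ y ∈ Icc c d, f x y ≤ g x y) :
    ∫ x in a..b, ∫ y in c..d, f x y ≤ ∫ x in a..b, ∫ y in c..d, g x y := by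
  rw [integral_integral_eq_setIntegral_rectangle hab hcd hf,
    integral_integral_eq_setIntegral_rectangle hab hcd hg]
  exact setIntegral_mono_on (integrableOn_rectangle hf) (integrableOn_rectangle hg)
    (measurableSet_Icc.prod measurableSet_Icc) fun p hp => hfg p.1 hp.1 p.2 hp.2

lemma integral_integral_swap_rectangle (hab : a ≤ b) (hcd : c ≤ d)
    (hf : ContinuousOn (uncurry f) (Icc a b ×ˢ Icc c d)) :
    ∫ x in a..b, ∫ y in c..d, f x y = ∫ y in c..d, ∫ x in a..b, f x y := by
  refine intervalIntegral_intervalIntegral_swap ((integrableOn_rectangle hf).mono_set ?_)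
  rw [uIoc_of_le hab, uIoc_of_le hcd]
  exact prod_mono Ioc_subset_Icc_self Ioc_subset_Icc_self

lemma intervalIntegrable_integral_rectangle (hab : a ≤ b) (hcd : c ≤ d)
    (hf : ContinuousOn (uncurry f) (Icc a b ×ˢ Icc c d)) :
    IntervalIntegrable (fun x => ∫ y in c..d, f x y) volume a b := by
  have hprod : Integrable (uncurry f)
      ((volume.restrict (Icc a b)).prod (volume.restrict (Icc c d))) := by
    rw [Measure.prod_restrict]
    exact integrableOn_rectangle hf
  rw [intervalIntegrable_iff_integrableOn_Icc_of_le hab]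
  simp only [intervalIntegral.integral_of_le hcd, ← integral_Icc_eq_integral_Ioc]
  exact hprod.integral_prod_left

lemma normL2R_congr (hab : a ≤ b) (hcd : c ≤ d)
    (hfg : ∀ x ∈ Icc a b, ∀ y ∈ Icc c d, f x y = g x y) :
    normL2R f a b c d = normL2R g a b c d := by
  refine congrArg Real.sqrt (intervalIntegral.integral_congr fun x hx =>
    intervalIntegral.integral_congr fun y hy => ?_)
  rw [uIcc_of_le hab] at hx
  rw [uIcc_of_le hcd] at hy
  simp only [hfg x hx y hy]

lemma normL2R_flip (hab : a ≤ b) (hcd : c ≤ d)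
    (hf : ContinuousOn (uncurry f) (Icc a b ×ˢ Icc c d)) :
    normL2R (flip f) c d a b = normL2R f a b c d :=
  congrArg Real.sqrt
    (integral_integral_swap_rectangle (f := fun x y => f x y ^ 2) hab hcd (hf.fun_pow 2)).symm

lemma integral_integral_abs_le_sqrt_mul_normL2R (hab : a ≤ b) (hcd : c ≤ d)
    (hf : ContinuousOn (uncurry f) (Icc a b ×ˢ Icc c d)) :
    ∫ x in a..b, ∫ y in c..d, |f x y| ≤ √((b - a) * (d - c)) * normL2R f a b c d := by
  have hK : IsCompact (Icc a b ×ˢ Icc c d) := isCompact_Icc.prod isCompact_Icc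
  have : IsFiniteMeasure (volume.restrict (Icc a b ×ˢ Icc c d)) :=
    isFiniteMeasure_restrict.2 hK.measure_lt_top.ne
  have hL2 : MemLp (uncurry f) 2 (volume.restrict (Icc a b ×ˢ Icc c d)) :=
    (memLp_two_iff_integrable_sq (integrableOn_rectangle hf).aestronglyMeasurable).2
      ((hf.pow 2).integrableOn_compact hK)
  have hvol : volume.real (Icc a b ×ˢ Icc c d) = (b - a) * (d - c) := by
    rw [Measure.volume_eq_prod, measureReal_prod_prod, Real.volume_real_Icc_of_le hab,
      Real.volume_real_Icc_of_le hcd]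
  rw [normL2R, integral_integral_eq_setIntegral_rectangle (f := fun x y => |f x y|) hab hcd hf.abs,
    integral_integral_eq_setIntegral_rectangle (f := fun x y => f x y ^ 2) hab hcd (hf.fun_pow 2),
    ← hvol, ← measureReal_restrict_apply_univ]
  simpa only [Real.norm_eq_abs, sq_abs, uncurry_def]
    using integral_norm_le_sqrt_measureReal_mul_sqrt_integral_norm_sq hL2

lemma abs_integral_integral_sub_mul_integral_le_pdy (hab : a ≤ b) (he : e ∈ Icc c d)
    (hf : ∀ p ∈ Icc a b ×ˢ Icc c d, ContDiffAt ℝ 1 (uncurry f) p) :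
    |(∫ x in a..b, ∫ y in c..d, f x y) - (d - c) * ∫ x in a..b, f x e|
      ≤ (d - c) * √((b - a) * (d - c)) * normL2R (pdy f) a b c d := by
  have hcd : c ≤ d := he.1.trans he.2
  have hfc : ContinuousOn (uncurry f) (Icc a b ×ˢ Icc c d) :=
    continuousOn_of_forall_continuousAt fun p hp => (hf p hp).continuousAt
  have hgc : ContinuousOn (uncurry (pdy f)) (Icc a b ×ˢ Icc c d) := continuousOn_pdy hf
  have hslice : ∀ x ∈ Ioc a b, ‖(∫ y in c..d, f x y) - (d - c) * f x e‖
      ≤ (d - c) * ∫ y in c..d, |pdy f x y| := by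
    intro x hx
    have hx' := Ioc_subset_Icc_self hx
    refine norm_integral_sub_smul_le_of_hasDerivAt
      (fun y hy => hasDerivAt_pdy ((hf _ ⟨hx', hy⟩).differentiableAt one_ne_zero)) ?_ he
    exact ContinuousOn.intervalIntegrable_of_Icc hcd
      (hgc.comp (Continuous.prodMk_right x).continuousOn fun y hy => ⟨hx', hy⟩)
  have htrace : IntervalIntegrable (fun x => f x e) volume a b :=
    ContinuousOn.intervalIntegrable_of_Icc hab
      (hfc.comp (Continuous.prodMk_left e).continuousOn fun x hx => ⟨hx, he⟩)
  calc |(∫ x in a..b, ∫ y in c..d, f x y) - (d - c) * ∫ x in a..b, f x e|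
      = ‖∫ x in a..b, ((∫ y in c..d, f x y) - (d - c) * f x e)‖ := by
        rw [intervalIntegral.integral_sub (intervalIntegrable_integral_rectangle hab hcd hfc)
          (htrace.const_mul _), intervalIntegral.integral_const_mul, Real.norm_eq_abs]
    _ ≤ ∫ x in a..b, (d - c) * ∫ y in c..d, |pdy f x y| :=
        intervalIntegral.norm_integral_le_of_norm_le hab (ae_of_all _ hslice)
          ((intervalIntegrable_integral_rectangle (f := fun x y => |pdy f x y|) hab hcd
            hgc.abs).const_mul _)
    _ = (d - c) * ∫ x in a..b, ∫ y in c..d, |pdy f x y| :=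
        intervalIntegral.integral_const_mul _ _
    _ ≤ (d - c) * (√((b - a) * (d - c)) * normL2R (pdy f) a b c d) :=
        mul_le_mul_of_nonneg_left (integral_integral_abs_le_sqrt_mul_normL2R hab hcd hgc)
          (sub_nonneg.2 hcd)
    _ = (d - c) * √((b - a) * (d - c)) * normL2R (pdy f) a b c d := (mul_assoc _ _ _).symm

lemma abs_integral_integral_sub_mul_integral_le_pdx (hcd : c ≤ d) (he : e ∈ Icc a b)
    (hf : ∀ p ∈ Icc a b ×ˢ Icc c d, ContDiffAt ℝ 1 (uncurry f) p) :
    |(∫ x in a..b, ∫ y in c..d, f x y) - (b - a) * ∫ y in c..d, f e y|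
      ≤ (b - a) * √((b - a) * (d - c)) * normL2R (pdx f) a b c d := by
  have hab : a ≤ b := he.1.trans he.2
  have hflip : ∀ p ∈ Icc c d ×ˢ Icc a b, ContDiffAt ℝ 1 (uncurry (flip f)) p := fun p hp =>
    (hf p.swap ⟨hp.2, hp.1⟩).comp p (contDiff_snd.prodMk contDiff_fst).contDiffAt
  have hfc : ContinuousOn (uncurry f) (Icc a b ×ˢ Icc c d) :=
    continuousOn_of_forall_continuousAt fun p hp => (hf p hp).continuousAt
  have hgc : ContinuousOn (uncurry (pdx f)) (Icc a b ×ˢ Icc c d) := continuousOn_pdx hf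
  rw [integral_integral_swap_rectangle hab hcd hfc, ← normL2R_flip hab hcd hgc,
    mul_comm (b - a) (d - c)]
  exact abs_integral_integral_sub_mul_integral_le_pdy hcd he hflip

lemma normL2R_le_sqrt_integral_integral (hab : a ≤ b) (hcd : c ≤ d)
    (hf : ContinuousOn (uncurry f) (Icc a b ×ˢ Icc c d))
    (hg : ContinuousOn (uncurry g) (Icc a b ×ˢ Icc c d))
    (hfg : ∀ x ∈ Icc a b, ∀ y ∈ Icc c d, f x y ^ 2 ≤ g x y) :
    normL2R f a b c d ≤ √(∫ x in a..b, ∫ y in c..d, g x y) :=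
  Real.sqrt_le_sqrt (integral_integral_mono_on_rectangle hab hcd (hf.fun_pow 2) hg hfg)

lemma normL2R_of_fst (φ : ℝ → ℝ) :
    normL2R (fun x _ => φ x) a b c d = √((d - c) * ∫ x in a..b, φ x ^ 2) := by
  simp [normL2R]

end Rectangle

section Seminorms

variable {u v : ℝ → ℝ → ℝ} {a b c d : ℝ}

lemma normL2R_pdx_pdx_le_semiH2R (hab : a ≤ b) (hcd : c ≤ d)
    (hv : ∀ p ∈ Icc a b ×ˢ Icc c d, ContDiffAt ℝ 2 (uncurry v) p) :
    normL2R (pdx (pdx v)) a b c d ≤ semiH2R v a b c d := by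
  obtain ⟨hxx, hxy, hyx, hyy⟩ := continuousOn_second_partials hv
  refine normL2R_le_sqrt_integral_integral hab hcd hxx
    ((((hxx.pow 2).add (hxy.pow 2)).add (hyx.pow 2)).add (hyy.pow 2)) fun x _ y _ => ?_
  linarith [sq_nonneg (pdx (pdy v) x y), sq_nonneg (pdy (pdx v) x y), sq_nonneg (pdy (pdy v) x y)]

lemma normL2R_pdy_pdy_le_semiH2R (hab : a ≤ b) (hcd : c ≤ d)
    (hv : ∀ p ∈ Icc a b ×ˢ Icc c d, ContDiffAt ℝ 2 (uncurry v) p) :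
    normL2R (pdy (pdy v)) a b c d ≤ semiH2R v a b c d := by
  obtain ⟨hxx, hxy, hyx, hyy⟩ := continuousOn_second_partials hv
  refine normL2R_le_sqrt_integral_integral hab hcd hyy
    ((((hxx.pow 2).add (hxy.pow 2)).add (hyx.pow 2)).add (hyy.pow 2)) fun x _ y _ => ?_
  linarith [sq_nonneg (pdx (pdx v) x y), sq_nonneg (pdx (pdy v) x y), sq_nonneg (pdy (pdx v) x y)]

lemma normL2R_pdx_pdx_pdy_pdy_le_semiH4R (hab : a ≤ b) (hcd : c ≤ d)
    (hu : ∀ p ∈ Icc a b ×ˢ Icc c d, ContDiffAt ℝ 4 (uncurry u) p) :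
    normL2R (pdx (pdx (pdy (pdy u)))) a b c d ≤ semiH4R u a b c d := by
  obtain ⟨hxxxx, -, -, -⟩ := continuousOn_second_partials fun p hp =>
    contDiffAt_pdx (m := 2) (contDiffAt_pdx (m := 3) (hu p hp) (by norm_num)) (by norm_num)
  obtain ⟨hxxxy, -, -, -⟩ := continuousOn_second_partials fun p hp =>
    contDiffAt_pdx (m := 2) (contDiffAt_pdy (m := 3) (hu p hp) (by norm_num)) (by norm_num)
  obtain ⟨hxxyy, hxyyy, -, hyyyy⟩ := continuousOn_second_partials fun p hp =>
    contDiffAt_pdy (m := 2) (contDiffAt_pdy (m := 3) (hu p hp) (by norm_num)) (by norm_num)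
  refine normL2R_le_sqrt_integral_integral hab hcd hxxyy
    (((((hxxxx.pow 2).add (continuousOn_const.mul (hxxxy.pow 2))).add
      (continuousOn_const.mul (hxxyy.pow 2))).add (continuousOn_const.mul (hxyyy.pow 2))).add
      (hyyyy.pow 2)) fun x _ y _ => ?_
  linarith [sq_nonneg (pdx (pdx (pdx (pdx u))) x y), sq_nonneg (pdx (pdx (pdx (pdy u))) x y),
    sq_nonneg (pdx (pdx (pdy (pdy u))) x y), sq_nonneg (pdx (pdy (pdy (pdy u))) x y),
    sq_nonneg (pdy (pdy (pdy (pdy u))) x y)]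

end Seminorms

namespace C4Near

variable {u : ℝ → ℝ → ℝ} {a b c d e : ℝ}

lemma contDiffAt (hu : C4Near u a b c d) :
    ∀ p ∈ Icc a b ×ˢ Icc c d, ContDiffAt ℝ 4 (uncurry u) p := by
  obtain ⟨U, hU, hKU, huU⟩ := hu
  exact fun p hp => huU.contDiffAt (hU.mem_nhds (hKU hp))

lemma abs_integral_integral_pdx_pdy_pdy_sub_le (hu : C4Near u a b c d) (hcd : c ≤ d)
    (he : e ∈ Icc a b) :
    |(∫ x in a..b, ∫ y in c..d, pdx (pdy (pdy u)) x y)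
        - (b - a) * ∫ y in c..d, pdx (pdy (pdy u)) e y|
      ≤ (b - a) * √((b - a) * (d - c)) * semiH4R u a b c d := by
  have hab : a ≤ b := he.1.trans he.2
  refine (abs_integral_integral_sub_mul_integral_le_pdx hcd he fun p hp => ?_).trans
    (mul_le_mul_of_nonneg_left (normL2R_pdx_pdx_pdy_pdy_le_semiH4R hab hcd hu.contDiffAt)
      (mul_nonneg (sub_nonneg.2 hab) (Real.sqrt_nonneg _)))
  exact contDiffAt_pdx (m := 1) (contDiffAt_pdy (m := 2) (contDiffAt_pdy (m := 3)
    (hu.contDiffAt p hp) (by norm_num)) (by norm_num)) (by norm_num)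

lemma abs_integral_integral_pdx_pdx_pdy_sub_le (hu : C4Near u a b c d) (hab : a ≤ b)
    (he : e ∈ Icc c d) :
    |(∫ x in a..b, ∫ y in c..d, pdx (pdx (pdy u)) x y)
        - (d - c) * ∫ x in a..b, pdx (pdx (pdy u)) x e|
      ≤ (d - c) * √((b - a) * (d - c)) * semiH4R u a b c d := by
  have hcd : c ≤ d := he.1.trans he.2
  have huy : ∀ p ∈ Icc a b ×ˢ Icc c d, ContDiffAt ℝ 3 (uncurry (pdy u)) p :=
    fun p hp => contDiffAt_pdy (hu.contDiffAt p hp) (by norm_num)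
  have hcomm : normL2R (pdy (pdx (pdx (pdy u)))) a b c d
      = normL2R (pdx (pdx (pdy (pdy u)))) a b c d :=
    normL2R_congr hab hcd fun x hx y hy => pdy_pdx_pdx_eq_pdx_pdx_pdy (huy (x, y) ⟨hx, hy⟩)
  refine (abs_integral_integral_sub_mul_integral_le_pdy hab he fun p hp => ?_).trans
    (mul_le_mul_of_nonneg_left (hcomm.trans_le
      (normL2R_pdx_pdx_pdy_pdy_le_semiH4R hab hcd hu.contDiffAt))
      (mul_nonneg (sub_nonneg.2 hcd) (Real.sqrt_nonneg _)))
  exact contDiffAt_pdx (m := 1) (contDiffAt_pdx (m := 2) (huy p hp) (by norm_num)) (by norm_num)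

end C4Near

lemma mul_sq_le_integral_affine_sq {a b : ℝ} (hab : a ≤ b) (p q : ℝ) :
    (b - a) ^ 3 / 12 * q ^ 2 ≤ ∫ x in a..b, (p + q * x) ^ 2 := by
  have hint : ∫ x in a..b, (p + q * x) ^ 2
      = (b - a) * (p + q * (a + b) / 2) ^ 2 + (b - a) ^ 3 / 12 * q ^ 2 := by
    rw [intervalIntegral.integral_eq_sub_of_hasDerivAt
      (f := fun x => p ^ 2 * x + p * q * x ^ 2 + q ^ 2 / 3 * x ^ 3) (fun x _ => ?_)
      (Continuous.intervalIntegrable (by fun_prop) _ _)]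
    · ring
    · refine ((((hasDerivAt_id x).const_mul (p ^ 2)).add
        ((hasDerivAt_pow 2 x).const_mul (p * q))).add
        ((hasDerivAt_pow 3 x).const_mul (q ^ 2 / 3))).congr_deriv ?_
      push_cast
      ring
  rw [hint]
  exact le_add_of_nonneg_left (mul_nonneg (sub_nonneg.2 hab) (sq_nonneg _))

lemma deriv_cubic (p q r s x : ℝ) :
    deriv (fun t => p + q * t + r * t ^ 2 + s * t ^ 3) x = q + 2 * r * x + 3 * s * x ^ 2 := by
  refine HasDerivAt.deriv ?_
  refine (((((hasDerivAt_id x).const_mul q).const_add p).add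
    ((hasDerivAt_pow 2 x).const_mul r)).add
    ((hasDerivAt_pow 3 x).const_mul s)).congr_deriv ?_
  push_cast
  ring

namespace MorleyShape2

variable {v : ℝ → ℝ → ℝ} {a b c d : ℝ}

protected lemma contDiff (hv : MorleyShape2 v) {n : WithTop ℕ∞} : ContDiff ℝ n (uncurry v) := by
  obtain ⟨c0, c1, c2, c3, c4, c5, c6, c7, hv⟩ := hv
  simp only [uncurry_def, hv]
  fun_prop

protected lemma flip (hv : MorleyShape2 v) : MorleyShape2 (flip v) := by
  obtain ⟨c0, c1, c2, c3, c4, c5, c6, c7, hv⟩ := hv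
  exact ⟨c0, c2, c1, c5, c4, c3, c7, c6, fun x y => by rw [flip, hv]; ring⟩

lemma exists_pdx_pdx_eq_affine (hv : MorleyShape2 v) :
    ∃ p q : ℝ, pdx (pdx v) = fun x _ => p + q * x := by
  obtain ⟨c0, c1, c2, c3, c4, c5, c6, c7, hv⟩ := hv
  have hx : pdx v = fun x y => c1 + c4 * y + 2 * c3 * x + 3 * c6 * x ^ 2 := by
    funext x y
    rw [pdx, ← deriv_cubic (c0 + c2 * y + c5 * y ^ 2 + c7 * y ^ 3)]
    congr 1
    funext t
    rw [hv]
    ring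
  refine ⟨2 * c3, 6 * c6, ?_⟩
  funext x y
  convert deriv_cubic (c1 + c4 * y) (2 * c3) (3 * c6) 0 x using 1
  · rw [hx, pdx]
    simp
  · ring

lemma exists_pdx_pdx_pdx_eq_const (hv : MorleyShape2 v) :
    ∃ α : ℝ, ∀ x y, pdx (pdx (pdx v)) x y = α := by
  obtain ⟨p, q, hpq⟩ := hv.exists_pdx_pdx_eq_affine
  exact ⟨q, fun x y => by rw [hpq]; simp [pdx]⟩

lemma exists_pdy_pdy_pdy_eq_const (hv : MorleyShape2 v) :
    ∃ β : ℝ, ∀ x y, pdy (pdy (pdy v)) x y = β := by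
  obtain ⟨β, hβ⟩ := hv.flip.exists_pdx_pdx_pdx_eq_const
  exact ⟨β, fun x y => hβ y x⟩

lemma sqrt_mul_abs_pdx_pdx_pdx_le_normL2R (hv : MorleyShape2 v) (hab : a ≤ b) (hcd : c ≤ d)
    (x y : ℝ) :
    √((b - a) ^ 3 * (d - c) / 12) * |pdx (pdx (pdx v)) x y| ≤ normL2R (pdx (pdx v)) a b c d := by
  obtain ⟨p, q, hpq⟩ := hv.exists_pdx_pdx_eq_affine
  have hq : pdx (pdx (pdx v)) x y = q := by rw [hpq]; simp [pdx]
  rw [hq, hpq, normL2R_of_fst, ← Real.sqrt_sq_eq_abs, ← Real.sqrt_mul' _ (sq_nonneg q)]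
  refine Real.sqrt_le_sqrt ?_
  calc (b - a) ^ 3 * (d - c) / 12 * q ^ 2 = (d - c) * ((b - a) ^ 3 / 12 * q ^ 2) := by ring
    _ ≤ (d - c) * ∫ x in a..b, (p + q * x) ^ 2 :=
        mul_le_mul_of_nonneg_left (mul_sq_le_integral_affine_sq hab p q) (sub_nonneg.2 hcd)

lemma sqrt_mul_abs_pdx_pdx_pdx_le_semiH2R (hv : MorleyShape2 v) (hab : a ≤ b) (hcd : c ≤ d)
    (x y : ℝ) :
    √((b - a) ^ 3 * (d - c) / 12) * |pdx (pdx (pdx v)) x y| ≤ semiH2R v a b c d :=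
  (hv.sqrt_mul_abs_pdx_pdx_pdx_le_normL2R hab hcd x y).trans
    (normL2R_pdx_pdx_le_semiH2R hab hcd fun _ _ => hv.contDiff.contDiffAt)

lemma sqrt_mul_abs_pdy_pdy_pdy_le_semiH2R (hv : MorleyShape2 v) (hab : a ≤ b) (hcd : c ≤ d)
    (x y : ℝ) :
    √((d - c) ^ 3 * (b - a) / 12) * |pdy (pdy (pdy v)) x y| ≤ semiH2R v a b c d := by
  obtain ⟨-, -, -, hyy⟩ := continuousOn_second_partials (K := Icc a b ×ˢ Icc c d) fun _ _ =>
    hv.contDiff.contDiffAt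
  calc √((d - c) ^ 3 * (b - a) / 12) * |pdy (pdy (pdy v)) x y|
      ≤ normL2R (flip (pdy (pdy v))) c d a b :=
        hv.flip.sqrt_mul_abs_pdx_pdx_pdx_le_normL2R hcd hab y x
    _ = normL2R (pdy (pdy v)) a b c d := normL2R_flip hab hcd hyy
    _ ≤ semiH2R v a b c d :=
        normL2R_pdy_pdy_le_semiH2R hab hcd fun _ _ => hv.contDiff.contDiffAt

end MorleyShape2


lemma abs_mul_mul_add_mul_le {s a b x y A B : ℝ} (hs : 0 ≤ s) (ha : s * |a| ≤ A) (hb : s * |b| ≤ A)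
    (hx : |x| ≤ B) (hy : |y| ≤ B) : |s * (a * x + b * y)| ≤ 2 * (A * B) := by
  have hA : 0 ≤ A := (mul_nonneg hs (abs_nonneg a)).trans ha
  calc |s * (a * x + b * y)| = s * |a * x + b * y| := by rw [abs_mul, abs_of_nonneg hs]
    _ ≤ s * (|a| * |x| + |b| * |y|) := by
        gcongr
        simpa only [abs_mul] using abs_add_le (a * x) (b * y)
    _ = (s * |a|) * |x| + (s * |b|) * |y| := by ring
    _ ≤ A * B + A * B := by gcongr
    _ = 2 * (A * B) := (two_mul _).symm

/-- Scaled superconvergence estimate combining the interpolation expansion terms with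
the correction coefficients `a` and `b` on one element. -/
theorem stmt_11 :
    ∃ C > (0:ℝ), ∀ h : ℝ, 0 < h → ∀ x1c x2c : ℝ, ∀ u v : ℝ → ℝ → ℝ,
      C4Near u (x1c - h) (x1c + h) (x2c - h) (x2c + h) → MorleyShape2 v →
      |(h ^ 2 / 3) * (∫ x in (x1c - h)..(x1c + h), ∫ y in (x2c - h)..(x2c + h),
            pdx (pdy (pdy u)) x y * pdx (pdx (pdx v)) x y)
          + (h ^ 2 / 3) * (∫ x in (x1c - h)..(x1c + h), ∫ y in (x2c - h)..(x2c + h),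
            pdx (pdx (pdy u)) x y * pdy (pdy (pdy v)) x y)
          + (-(h / 6) * (∫ t in (x2c - h)..(x2c + h), pdx (pdy (pdy u)) (x1c + h) t))
            * (∫ x in (x1c - h)..(x1c + h), ∫ y in (x2c - h)..(x2c + h), pdx (pdx (pdx v)) x y)
          + (-(h / 6) * (∫ t in (x1c - h)..(x1c + h), pdx (pdx (pdy u)) t (x2c - h)))
            * (∫ x in (x1c - h)..(x1c + h), ∫ y in (x2c - h)..(x2c + h), pdy (pdy (pdy v)) x y)|
        ≤ C * h ^ 2 * semiH4R u (x1c - h) (x1c + h) (x2c - h) (x2c + h) * semiH2R v (x1c - h) (x1c + h) (x2c - h) (x2c + h) := by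
  refine ⟨8 / 3, by norm_num, fun h hh x1c x2c u v hu hv => ?_⟩
  have hside (m : ℝ) : m + h - (m - h) = 2 * h := by ring
  have hle (m : ℝ) : m - h ≤ m + h := by linarith
  have hsqrt : √(2 * h * (2 * h)) = 2 * h := Real.sqrt_mul_self (by linarith)
  have hinverse {t M : ℝ} (ht : √((2 * h) ^ 3 * (2 * h) / 12) * |t| ≤ M) :
      h ^ 2 / 3 * |t| ≤ M / 3 := by
    have hsq : h ^ 2 ≤ √((2 * h) ^ 3 * (2 * h) / 12) :=
      Real.le_sqrt_of_sq_le (by nlinarith [pow_pos hh 4])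
    linarith [mul_le_mul_of_nonneg_right hsq (abs_nonneg t)]
  have hE₁ := hu.abs_integral_integral_pdx_pdy_pdy_sub_le (hle x2c) (right_mem_Icc.2 (hle x1c))
  have hE₂ := hu.abs_integral_integral_pdx_pdx_pdy_sub_le (hle x1c) (left_mem_Icc.2 (hle x2c))
  have hM₁ := hv.sqrt_mul_abs_pdx_pdx_pdx_le_semiH2R (hle x1c) (hle x2c) 0 0
  have hM₂ := hv.sqrt_mul_abs_pdy_pdy_pdy_le_semiH2R (hle x1c) (hle x2c) 0 0
  obtain ⟨α, hα⟩ := hv.exists_pdx_pdx_pdx_eq_const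
  obtain ⟨β, hβ⟩ := hv.exists_pdy_pdy_pdy_eq_const
  simp only [hα, hβ, hside, hsqrt, intervalIntegral.integral_mul_const,
    intervalIntegral.integral_const, smul_eq_mul] at hE₁ hE₂ hM₁ hM₂ ⊢
  convert abs_mul_mul_add_mul_le (by positivity) (hinverse hM₁) (hinverse hM₂) hE₁ hE₂ using 1
  · congr 1
    ring
  · ring
end

section
/- For every ŵ in the reference shape space P̂ = P₂(K̂) + span{ξ₁³, ξ₂³, ξ₃³, ξ₁ξ₂ξ₃} of the three-dimensional cubic Morley element and for each i ∈ {1, 2, 3}, the orthogonality relation ∫_{K̂} ∂(ŵ − Îŵ)/∂ξᵢ dξ₁dξ₂dξ₃ = 0 holds. -/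
/-!
A function in the shape space is trilinear up to a sum `u(ξ₁) + v(ξ₂) + s(ξ₃)` of functions of one
variable. The operator `Î` reproduces the trilinear part and acts on the sum by affine
interpolation of each of `u`, `v`, `s` at `±1`. Hence the interpolation error is again a sum of
functions of one variable, each vanishing at `±1`, and the fundamental theorem of calculus along
each axis gives the orthogonality. For `u`, `v`, `s` it is enough to be `C¹` on `[-1, 1]`.
-/

open MeasureTheory

/-- Partial derivative in the first variable of a curried function on `ℝ³`. -/
noncomputable def qd1 (f : ℝ → ℝ → ℝ → ℝ) : ℝ → ℝ → ℝ → ℝ :=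
  fun x y z => deriv (fun t => f t y z) x

/-- Partial derivative in the second variable of a curried function on `ℝ³`. -/
noncomputable def qd2 (f : ℝ → ℝ → ℝ → ℝ) : ℝ → ℝ → ℝ → ℝ :=
  fun x y z => deriv (fun t => f x t z) y

/-- Partial derivative in the third variable of a curried function on `ℝ³`. -/
noncomputable def qd3 (f : ℝ → ℝ → ℝ → ℝ) : ℝ → ℝ → ℝ → ℝ :=
  fun x y z => deriv (fun t => f x y t) z

/-- Membership in the shape space `P(K) = P₂(K) + span{x₁³, x₂³, x₃³, x₁x₂x₃}` of the
three-dimensional cubic Morley element. -/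
def MorleyShape3 (w : ℝ → ℝ → ℝ → ℝ) : Prop :=
  ∃ c0 c1 c2 c3 c4 c5 c6 c7 c8 c9 c10 c11 c12 c13 : ℝ, ∀ x y z : ℝ,
    w x y z = c0 + c1 * x + c2 * y + c3 * z + c4 * x ^ 2 + c5 * y ^ 2 + c6 * z ^ 2
      + c7 * (x * y) + c8 * (x * z) + c9 * (y * z)
      + c10 * x ^ 3 + c11 * y ^ 3 + c12 * z ^ 3 + c13 * (x * y * z)

/-- The trilinear (Q₁) interpolation operator on the reference cube `[-1,1]³`. -/
noncomputable def Ihat3 (w : ℝ → ℝ → ℝ → ℝ) : ℝ → ℝ → ℝ → ℝ := fun x y z =>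
  (w 1 1 1 * ((1 + x) * (1 + y) * (1 + z))
    + w 1 1 (-1) * ((1 + x) * (1 + y) * (1 - z))
    + w 1 (-1) 1 * ((1 + x) * (1 - y) * (1 + z))
    + w 1 (-1) (-1) * ((1 + x) * (1 - y) * (1 - z))
    + w (-1) 1 1 * ((1 - x) * (1 + y) * (1 + z))
    + w (-1) 1 (-1) * ((1 - x) * (1 + y) * (1 - z))
    + w (-1) (-1) 1 * ((1 - x) * (1 - y) * (1 + z))
    + w (-1) (-1) (-1) * ((1 - x) * (1 - y) * (1 - z))) / 8

/-- The space `Q₁` of trilinear polynomials on `ℝ³`, given by coefficients as in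
`MorleyShape3`. -/
def IsTrilinear (g : ℝ → ℝ → ℝ → ℝ) : Prop :=
  ∃ c0 c1 c2 c3 c4 c5 c6 c7 : ℝ, ∀ x y z : ℝ,
    g x y z = c0 + c1 * x + c2 * y + c3 * z + c4 * (x * y) + c5 * (x * z) + c6 * (y * z)
      + c7 * (x * y * z)

/-- The additively separable function `p(ξ₁) + q(ξ₂) + r(ξ₃)` with one summand per coordinate
axis, the form taken by the interpolation error. -/
def axisSum (p q r : ℝ → ℝ) : ℝ → ℝ → ℝ → ℝ := fun x y z => p x + q y + r z

/-- The affine interpolant of `u` at the end points `±1` of the reference interval, the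
one-dimensional analogue of `Ihat3`. -/
noncomputable def affineInterp (u : ℝ → ℝ) : ℝ → ℝ := fun t =>
  (u 1 * (1 + t) + u (-1) * (1 - t)) / 2

theorem affineInterp_one (u : ℝ → ℝ) : affineInterp u 1 = u 1 := by
  simp only [affineInterp]
  ring

theorem affineInterp_neg_one (u : ℝ → ℝ) : affineInterp u (-1) = u (-1) := by
  simp only [affineInterp]
  ring

theorem contDiff_affineInterp {n : WithTop ℕ∞} (u : ℝ → ℝ) : ContDiff ℝ n (affineInterp u) := by
  unfold affineInterp
  fun_prop

theorem integral_deriv_sub_affineInterp {u : ℝ → ℝ} (hu : ContDiffOn ℝ 1 u (Set.Icc (-1) 1)) :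
    ∫ t in (-1:ℝ)..1, deriv (u - affineInterp u) t = 0 := by
  have error_contDiffOn : ContDiffOn ℝ 1 (u - affineInterp u) (Set.Icc (-1) 1) :=
    hu.sub (contDiff_affineInterp u).contDiffOn
  rw [intervalIntegral.integral_deriv_of_contDiffOn_Icc error_contDiffOn (by norm_num)]
  simp only [Pi.sub_apply, affineInterp_one, affineInterp_neg_one, sub_self]

theorem Ihat3_add (f g : ℝ → ℝ → ℝ → ℝ) : Ihat3 (f + g) = Ihat3 f + Ihat3 g := by
  ext x y z
  simp only [Ihat3, Pi.add_apply]
  ring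

theorem IsTrilinear.Ihat3_eq {g : ℝ → ℝ → ℝ → ℝ} (hg : IsTrilinear g) : Ihat3 g = g := by
  obtain ⟨c0, c1, c2, c3, c4, c5, c6, c7, hg⟩ := hg
  ext x y z
  simp only [Ihat3, hg]
  ring

theorem Ihat3_axisSum (u v s : ℝ → ℝ) :
    Ihat3 (axisSum u v s) = axisSum (affineInterp u) (affineInterp v) (affineInterp s) := by
  ext x y z
  simp only [Ihat3, axisSum, affineInterp]
  ring

theorem axisSum_sub (p q r p' q' r' : ℝ → ℝ) :
    axisSum p q r - axisSum p' q' r' = axisSum (p - p') (q - q') (r - r') := by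
  ext x y z
  simp only [axisSum, Pi.sub_apply]
  ring

theorem IsTrilinear.add_axisSum_sub_Ihat3 {g : ℝ → ℝ → ℝ → ℝ} (hg : IsTrilinear g)
    (u v s : ℝ → ℝ) :
    (g + axisSum u v s) - Ihat3 (g + axisSum u v s) =
      axisSum (u - affineInterp u) (v - affineInterp v) (s - affineInterp s) := by
  rw [Ihat3_add, hg.Ihat3_eq, Ihat3_axisSum, add_sub_add_left_eq_sub, axisSum_sub]

theorem qd1_axisSum (p q r : ℝ → ℝ) : qd1 (axisSum p q r) = fun x _ _ => deriv p x := by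
  ext x y z
  simp only [qd1, axisSum, deriv_add_const]

theorem qd2_axisSum (p q r : ℝ → ℝ) : qd2 (axisSum p q r) = fun _ y _ => deriv q y := by
  ext x y z
  simp only [qd2, axisSum, deriv_add_const, deriv_const_add]

theorem qd3_axisSum (p q r : ℝ → ℝ) : qd3 (axisSum p q r) = fun _ _ z => deriv r z := by
  ext x y z
  simp only [qd3, axisSum, deriv_const_add]

theorem MorleyShape3.exists_eq_add_axisSum {w : ℝ → ℝ → ℝ → ℝ} (hw : MorleyShape3 w) :
    ∃ (g : ℝ → ℝ → ℝ → ℝ) (u v s : ℝ → ℝ), IsTrilinear g ∧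
      ContDiff ℝ 1 u ∧ ContDiff ℝ 1 v ∧ ContDiff ℝ 1 s ∧ w = g + axisSum u v s := by
  obtain ⟨c0, c1, c2, c3, c4, c5, c6, c7, c8, c9, c10, c11, c12, c13, hw⟩ := hw
  refine ⟨fun x y z => c0 + c1 * x + c2 * y + c3 * z + c7 * (x * y) + c8 * (x * z) + c9 * (y * z)
      + c13 * (x * y * z),
    fun x => c4 * x ^ 2 + c10 * x ^ 3, fun y => c5 * y ^ 2 + c11 * y ^ 3,
    fun z => c6 * z ^ 2 + c12 * z ^ 3,
    ⟨c0, c1, c2, c3, c7, c8, c9, c13, fun _ _ _ => rfl⟩,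
    by fun_prop, by fun_prop, by fun_prop, ?_⟩
  ext x y z
  simp only [hw, axisSum, Pi.add_apply]
  ring

theorem stmt_13_general {w g : ℝ → ℝ → ℝ → ℝ} {u v s : ℝ → ℝ} (hg : IsTrilinear g)
    (hu : ContDiffOn ℝ 1 u (Set.Icc (-1) 1)) (hv : ContDiffOn ℝ 1 v (Set.Icc (-1) 1))
    (hs : ContDiffOn ℝ 1 s (Set.Icc (-1) 1)) (hw : w = g + axisSum u v s) :
    (∫ x in (-1:ℝ)..1, ∫ y in (-1:ℝ)..1, ∫ z in (-1:ℝ)..1,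
        qd1 (fun a b c => w a b c - Ihat3 w a b c) x y z) = 0 ∧
    (∫ x in (-1:ℝ)..1, ∫ y in (-1:ℝ)..1, ∫ z in (-1:ℝ)..1,
        qd2 (fun a b c => w a b c - Ihat3 w a b c) x y z) = 0 ∧
    (∫ x in (-1:ℝ)..1, ∫ y in (-1:ℝ)..1, ∫ z in (-1:ℝ)..1,
        qd3 (fun a b c => w a b c - Ihat3 w a b c) x y z) = 0 := by
  have error_eq : (fun a b c => w a b c - Ihat3 w a b c) =
      axisSum (u - affineInterp u) (v - affineInterp v) (s - affineInterp s) := by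
    rw [hw]
    exact hg.add_axisSum_sub_Ihat3 u v s
  rw [error_eq, qd1_axisSum, qd2_axisSum, qd3_axisSum]
  simp only [intervalIntegral.integral_const, intervalIntegral.integral_smul,
    integral_deriv_sub_affineInterp hu, integral_deriv_sub_affineInterp hv,
    integral_deriv_sub_affineInterp hs, smul_zero, and_self]

/-- Orthogonality of the gradient of the trilinear interpolation error on the reference
cube, for functions in the reference cubic Morley shape space. -/
theorem stmt_13 (w : ℝ → ℝ → ℝ → ℝ) (hw : MorleyShape3 w) :
    (∫ x in (-1:ℝ)..1, ∫ y in (-1:ℝ)..1, ∫ z in (-1:ℝ)..1,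
        qd1 (fun a b c => w a b c - Ihat3 w a b c) x y z) = 0 ∧
    (∫ x in (-1:ℝ)..1, ∫ y in (-1:ℝ)..1, ∫ z in (-1:ℝ)..1,
        qd2 (fun a b c => w a b c - Ihat3 w a b c) x y z) = 0 ∧
    (∫ x in (-1:ℝ)..1, ∫ y in (-1:ℝ)..1, ∫ z in (-1:ℝ)..1,
        qd3 (fun a b c => w a b c - Ihat3 w a b c) x y z) = 0 := by
  obtain ⟨g, u, v, s, hg, hu, hv, hs, hw_eq⟩ := hw.exists_eq_add_axisSum
  exact stmt_13_general hg hu.contDiffOn hv.contDiffOn hs.contDiffOn hw_eq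
end
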